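/- Let f : V → ℂ be radial around v_0 with profile F, let γ ∈ ℂ, and assume μ_1 f = γ·f and f(v_0) = 1. Then for every v ∈ V_+ and every even n ∈ ℕ: Σ_{u ∈ C(n)} F(dist(u,v)) = #C(n)·F(|v|)·F(n). -/

import Mathlib

/-!
In a tree, the vertices at distance `n + 1` from `v` have all their neighbours at distance `n` or
`n + 2`. Summing the eigenvalue equation of `h` over this sphere therefore gives a linear recurrence
between the sums of `h` over three consecutive spheres, whose coefficients depend only on the
eigenvalue and on the degrees at each distance from `v`. Hence the sum of an eigenfunction `h`
over the sphere of radius `n` is `h v` times a number independent of `h`.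

If `w ↦ F (dist v₀ w)` is an eigenfunction, then so is `w ↦ F (dist v w)` for each `v` from which
the degrees are distributed as from `v₀`. Comparing the sums of both over a sphere around `v₀` gives
the product formula.
-/

open scoped BigOperators ComplexOrder

/-- A semi-homogeneous tree `T_{q_+,q_-}`: a connected acyclic simple graph with a
parity function `eps` (true = `+`, false = `−`) that flips across edges, in which every
vertex of parity `+` has exactly `qp + 1` neighbors and every vertex of parity `−` has
exactly `qm + 1` neighbors.  Spheres are finite (this follows from local finiteness
and connectedness, and is recorded as a field for convenience). -/
structure SemiHomTree (qp qm : ℕ) (V : Type) where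
  G : SimpleGraph V
  connected : G.Connected
  acyclic : G.IsAcyclic
  eps : V → Bool
  adj_parity : ∀ ⦃v w : V⦄, G.Adj v w → eps w = !eps v
  nbr_finite : ∀ v : V, {w : V | G.Adj v w}.Finite
  degree_plus : ∀ v : V, eps v = true → {w : V | G.Adj v w}.ncard = qp + 1
  degree_minus : ∀ v : V, eps v = false → {w : V | G.Adj v w}.ncard = qm + 1
  sphere_finite : ∀ (v : V) (n : ℕ), {w : V | G.dist v w = n}.Finite

/-- The averaging operator `M_n`: average of `f` over the sphere of radius `n` around `v`. -/
noncomputable def Mop {qp qm : ℕ} {V : Type} (T : SemiHomTree qp qm V)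
    (n : ℕ) (f : V → ℂ) (v : V) : ℂ :=
  (({w : V | T.G.dist v w = n}.ncard : ℂ))⁻¹ * ∑ᶠ w ∈ {w : V | T.G.dist v w = n}, f w

/-- The Laplace operator `μ₁`: the average of `f` over the neighbors of `v`. -/
noncomputable def lap {qp qm : ℕ} {V : Type} (T : SemiHomTree qp qm V)
    (f : V → ℂ) (v : V) : ℂ :=
  (((if T.eps v then qp else qm : ℕ) : ℂ) + 1)⁻¹ * ∑ᶠ w ∈ {w : V | T.G.Adj v w}, f w

section Tree

open SimpleGraph

variable {V : Type*} {G : SimpleGraph V}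

lemma exists_adj_dist_eq_of_dist_eq_succ (hG : G.Connected) {v u : V} {n : ℕ}
    (hu : G.dist v u = n + 1) : ∃ w, G.Adj u w ∧ G.dist v w = n := by
  rw [dist_comm] at hu
  obtain ⟨p, hp⟩ := hG.exists_walk_length_eq_dist u v
  cases p with
  | nil => simp at hu
  | @cons _ w _ huw q =>
    refine ⟨w, huw, ?_⟩
    have hq : q.length = n := by simpa [hu] using hp
    have hle : G.dist w v ≤ n := hq ▸ dist_le q
    have htriangle : G.dist u v ≤ G.dist u w + G.dist w v := hG.dist_triangle
    rw [dist_eq_one_iff_adj.2 huw] at htriangle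
    rw [dist_comm]
    omega

lemma existsUnique_adj_dist_eq_of_dist_eq_succ (hG : G.IsTree) {v u : V} {n : ℕ}
    (hu : G.dist v u = n + 1) : ∃! w, G.Adj u w ∧ G.dist v w = n := by
  refine existsUnique_of_exists_of_unique
    (exists_adj_dist_eq_of_dist_eq_succ hG.connected hu) fun w w' ⟨hw, hvw⟩ ⟨hw', hvw'⟩ ↦ ?_
  rw [dist_comm] at hu hvw hvw'
  obtain ⟨q, hq⟩ := hG.connected.exists_walk_length_eq_dist w v
  obtain ⟨q', hq'⟩ := hG.connected.exists_walk_length_eq_dist w' v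
  have hpath := (Walk.cons hw q).isPath_of_length_eq_dist (by simp [hq, hvw, hu])
  have hpath' := (Walk.cons hw' q').isPath_of_length_eq_dist (by simp [hq', hvw', hu])
  simpa using congrArg Walk.snd ((hG.existsUnique_path u v).unique hpath hpath')

variable [G.LocallyFinite]

variable (G) in
/-- The children of `u` in the graph `G` rooted at `v`: its neighbours one step further from `v`. -/
noncomputable def childFinset (v u : V) : Finset V :=
  {w ∈ G.neighborFinset u | G.dist v w = G.dist v u + 1}

variable (G) in
/-- The parents of `u` in the graph `G` rooted at `v`: its neighbours one step closer to `v`. -/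
noncomputable def parentFinset (v u : V) : Finset V :=
  {w ∈ G.neighborFinset u | G.dist v u = G.dist v w + 1}

open Classical in
variable (G) in
/-- The sphere of radius `n` around `v`, grown one generation of children at a time, so that it is
a `Finset` for every locally finite `G`; see `mem_sphereFinset` for connected `G`. -/
noncomputable def sphereFinset (v : V) : ℕ → Finset V
  | 0 => {v}
  | n + 1 => (sphereFinset v n).biUnion (childFinset G v)

lemma mem_childFinset {v u w : V} :
    w ∈ childFinset G v u ↔ G.Adj u w ∧ G.dist v w = G.dist v u + 1 := by
  simp [childFinset]

lemma mem_parentFinset {v u w : V} :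
    w ∈ parentFinset G v u ↔ G.Adj u w ∧ G.dist v u = G.dist v w + 1 := by
  simp [parentFinset]

lemma mem_parentFinset_iff_mem_childFinset {v u w : V} :
    w ∈ parentFinset G v u ↔ u ∈ childFinset G v w := by
  rw [mem_parentFinset, mem_childFinset, adj_comm]

lemma card_parentFinset (hG : G.IsTree) (v u : V) :
    (parentFinset G v u).card = if G.dist v u = 0 then 0 else 1 := by
  rcases hu : G.dist v u with _ | n
  · simp [parentFinset, hu]
  · obtain ⟨w, hw, hunique⟩ := existsUnique_adj_dist_eq_of_dist_eq_succ hG hu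
    rw [if_neg n.succ_ne_zero, Finset.card_eq_one]
    refine ⟨w, Finset.ext fun w' ↦ ?_⟩
    rw [mem_parentFinset, hu, Nat.add_right_cancel_iff, eq_comm (a := n), Finset.mem_singleton]
    exact ⟨hunique w', fun h ↦ h ▸ hw⟩

lemma sum_neighborFinset_eq_add {M : Type*} [AddCommMonoid M] (hG : G.IsTree) (v u : V)
    (h : V → M) : ∑ w ∈ G.neighborFinset u, h w =
      ∑ w ∈ childFinset G v u, h w + ∑ w ∈ parentFinset G v u, h w := by
  rw [← Finset.sum_filter_add_sum_filter_not _ (fun w ↦ G.dist v w = G.dist v u + 1)]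
  refine congrArg₂ _ rfl (Finset.sum_congr (Finset.filter_congr fun w hw ↦ ?_) fun _ _ ↦ rfl)
  have := hG.dist_eq_dist_add_one_of_adj v ((G.mem_neighborFinset u w).1 hw)
  omega

lemma card_childFinset (hG : G.IsTree) (v u : V) :
    (childFinset G v u).card = G.degree u - if G.dist v u = 0 then 0 else 1 := by
  have := sum_neighborFinset_eq_add hG v u (fun _ ↦ 1)
  simp only [← Finset.card_eq_sum_ones, card_neighborFinset_eq_degree, card_parentFinset hG] at this
  omega

lemma sum_neighborFinset_radial {M : Type*} [AddCommMonoid M] (hG : G.IsTree) (v u : V)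
    (F : ℕ → M) : ∑ w ∈ G.neighborFinset u, F (G.dist v w) =
      (childFinset G v u).card • F (G.dist v u + 1) +
        (parentFinset G v u).card • F (G.dist v u - 1) := by
  rw [sum_neighborFinset_eq_add hG v]
  congr 1 <;> refine Finset.sum_eq_card_nsmul fun w hw ↦ congrArg F ?_
  · exact (mem_childFinset.1 hw).2
  · exact (Nat.sub_eq_of_eq_add (mem_parentFinset.1 hw).2).symm

lemma sum_neighborFinset_radial_congr {M : Type*} [AddCommMonoid M] (hG : G.IsTree) {v u v' u' : V}
    (hdist : G.dist v u = G.dist v' u') (hdeg : G.degree u = G.degree u') (F : ℕ → M) :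
    ∑ w ∈ G.neighborFinset u, F (G.dist v w) = ∑ w ∈ G.neighborFinset u', F (G.dist v' w) := by
  simp only [sum_neighborFinset_radial hG, card_childFinset hG, card_parentFinset hG, hdist, hdeg]

@[simp]
lemma sphereFinset_zero (v : V) : sphereFinset G v 0 = {v} := rfl

lemma sphereFinset_one (v : V) : sphereFinset G v 1 = G.neighborFinset v := by
  ext w
  simp [sphereFinset, mem_childFinset]

lemma mem_sphereFinset (hG : G.Connected) {v w : V} {n : ℕ} :
    w ∈ sphereFinset G v n ↔ G.dist v w = n := by
  induction n generalizing w with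
  | zero => rw [sphereFinset_zero, Finset.mem_singleton, hG.dist_eq_zero_iff, eq_comm]
  | succ n ih =>
    simp only [sphereFinset, Finset.mem_biUnion, mem_childFinset, ih]
    refine ⟨fun ⟨_, hu, _, hw⟩ ↦ hu ▸ hw, fun hw ↦ ?_⟩
    obtain ⟨u, hwu, hu⟩ := exists_adj_dist_eq_of_dist_eq_succ hG hw
    exact ⟨u, hu, hwu.symm, hu ▸ hw⟩

lemma coe_sphereFinset (hG : G.Connected) (v : V) (n : ℕ) :
    (sphereFinset G v n : Set V) = {w | G.dist v w = n} :=
  Set.ext fun _ ↦ mem_sphereFinset hG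

lemma sum_sphereFinset_succ {M : Type*} [AddCommMonoid M] (hG : G.IsTree) (v : V) (n : ℕ)
    (h : V → M) : ∑ w ∈ sphereFinset G v (n + 1), h w =
      ∑ u ∈ sphereFinset G v n, ∑ w ∈ childFinset G v u, h w := by
  classical
  refine Finset.sum_biUnion fun u _ u' _ hne ↦ Finset.disjoint_left.2 fun w hw hw' ↦ hne ?_
  rw [← mem_parentFinset_iff_mem_childFinset] at hw hw'
  have hcard : (parentFinset G v w).card ≤ 1 := by rw [card_parentFinset hG]; split_ifs <;> simp
  exact Finset.card_le_one.1 hcard u hw u' hw'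

lemma sum_sphereFinset_succ_sum_parentFinset {M : Type*} [AddCommMonoid M] (hG : G.Connected)
    (v : V) (n : ℕ) (h : V → M) :
    ∑ u ∈ sphereFinset G v (n + 1), ∑ w ∈ parentFinset G v u, h w =
      ∑ w ∈ sphereFinset G v n, (childFinset G v w).card • h w := by
  simp only [← Finset.sum_const]
  refine Finset.sum_comm' fun u w ↦ ?_
  rw [mem_parentFinset_iff_mem_childFinset, mem_sphereFinset hG, mem_sphereFinset hG,
    mem_childFinset]
  grind

lemma sum_sphereFinset_succ_sum_neighborFinset {M : Type*} [AddCommMonoid M] (hG : G.IsTree)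
    (v : V) (n : ℕ) (h : V → M) :
    ∑ u ∈ sphereFinset G v (n + 1), ∑ w ∈ G.neighborFinset u, h w =
      ∑ w ∈ sphereFinset G v (n + 2), h w +
        ∑ w ∈ sphereFinset G v n, (childFinset G v w).card • h w := by
  simp only [sum_neighborFinset_eq_add hG v, Finset.sum_add_distrib]
  rw [← sum_sphereFinset_succ hG, sum_sphereFinset_succ_sum_parentFinset hG.connected]

lemma sum_sphereFinset_radial {M : Type*} [AddCommMonoid M] (hG : G.Connected) (v : V) (n : ℕ)
    (F : ℕ → M) :
    ∑ w ∈ sphereFinset G v n, F (G.dist v w) = (sphereFinset G v n).card • F n :=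
  Finset.sum_eq_card_nsmul fun _ hw ↦ congrArg F ((mem_sphereFinset hG).1 hw)

lemma exists_dist_eq_dist_of_radial_degree (hG : G.IsTree) {d : ℕ → ℕ} {v v' : V}
    (hd : ∀ u, G.degree u = d (G.dist v u)) (hd' : ∀ u, G.degree u = d (G.dist v' u)) (u : V) :
    ∃ u', G.dist v' u' = G.dist v u := by
  induction hn : G.dist v u generalizing u with
  | zero => exact ⟨v', dist_self⟩
  | succ n ih =>
    obtain ⟨w, huw, hw⟩ := exists_adj_dist_eq_of_dist_eq_succ hG.connected hn
    obtain ⟨w', hw'⟩ := ih w hw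
    have hcard : (childFinset G v' w').card = (childFinset G v w).card := by
      simp only [card_childFinset hG, hd' w', hd w, hw', hw]
    have hchild : u ∈ childFinset G v w := mem_childFinset.2 ⟨huw.symm, hw ▸ hn⟩
    obtain ⟨u', hu'⟩ := Finset.card_pos.1 (hcard ▸ Finset.card_pos.2 ⟨u, hchild⟩)
    exact ⟨u', hw' ▸ (mem_childFinset.1 hu').2⟩

section Eigenfunction

variable {R : Type*} [CommRing R] {γ : R} {h : V → R} {d : ℕ → ℕ} {v : V}

variable (G) in
/-- `h` is an eigenfunction, with eigenvalue `γ`, of the operator averaging a function over the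
neighbours of each vertex. The equation is multiplied by the degree, so that `R` need not have
division. -/
def IsLaplaceEigenfunction (γ : R) (h : V → R) : Prop :=
  ∀ u, ∑ w ∈ G.neighborFinset u, h w = G.degree u * (γ * h u)

namespace IsLaplaceEigenfunction

lemma sum_sphereFinset_one (hh : IsLaplaceEigenfunction G γ h) :
    ∑ w ∈ sphereFinset G v 1, h w = G.degree v * (γ * h v) := by
  rw [sphereFinset_one, hh v]

lemma sum_sphereFinset_add_two (hG : G.IsTree) (hd : ∀ u, G.degree u = d (G.dist v u))
    (hh : IsLaplaceEigenfunction G γ h) (n : ℕ) :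
    ∑ w ∈ sphereFinset G v (n + 2), h w =
      d (n + 1) * (γ * ∑ w ∈ sphereFinset G v (n + 1), h w) -
        (d n - if n = 0 then 0 else 1 : ℕ) * ∑ w ∈ sphereFinset G v n, h w := by
  have hsum := sum_sphereFinset_succ_sum_neighborFinset hG v n h
  have houter : ∑ u ∈ sphereFinset G v (n + 1), ∑ w ∈ G.neighborFinset u, h w =
      d (n + 1) * (γ * ∑ w ∈ sphereFinset G v (n + 1), h w) := by
    simp only [Finset.mul_sum]
    refine Finset.sum_congr rfl fun u hu ↦ ?_
    rw [hh u, hd, (mem_sphereFinset hG.connected).1 hu]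
  have hinner : ∑ w ∈ sphereFinset G v n, (childFinset G v w).card • h w =
      (d n - if n = 0 then 0 else 1 : ℕ) * ∑ w ∈ sphereFinset G v n, h w := by
    rw [Finset.mul_sum]
    refine Finset.sum_congr rfl fun w hw ↦ ?_
    rw [card_childFinset hG, hd, (mem_sphereFinset hG.connected).1 hw, nsmul_eq_mul]
  rw [← houter, ← hinner, hsum, add_sub_cancel_right]

lemma mul_sum_sphereFinset_comm (hG : G.IsTree) (hd : ∀ u, G.degree u = d (G.dist v u))
    {f : V → R} (hf : IsLaplaceEigenfunction G γ f) (hh : IsLaplaceEigenfunction G γ h) (n : ℕ) :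
    f v * ∑ w ∈ sphereFinset G v n, h w = h v * ∑ w ∈ sphereFinset G v n, f w := by
  induction n using Nat.twoStepInduction with
  | zero => simp [mul_comm]
  | one => rw [hf.sum_sphereFinset_one, hh.sum_sphereFinset_one]; ring
  | more n ih ih' =>
    rw [hf.sum_sphereFinset_add_two hG hd, hh.sum_sphereFinset_add_two hG hd]
    linear_combination d (n + 1) * γ * ih' - (d n - if n = 0 then 0 else 1 : ℕ) * ih

lemma radial_of_radial {v' : V} {F : ℕ → R} (hG : G.IsTree)
    (hd : ∀ u, G.degree u = d (G.dist v u)) (hd' : ∀ u, G.degree u = d (G.dist v' u))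
    (hF : IsLaplaceEigenfunction G γ fun u ↦ F (G.dist v u)) :
    IsLaplaceEigenfunction G γ fun u ↦ F (G.dist v' u) := by
  intro u
  obtain ⟨u', hu'⟩ := exists_dist_eq_dist_of_radial_degree hG hd' hd u
  have hdeg : G.degree u' = G.degree u := by rw [hd, hd', hu']
  have heig : _ = _ * (γ * F (G.dist v u')) := hF u'
  rwa [sum_neighborFinset_radial_congr hG hu' hdeg, hdeg, hu'] at heig

lemma sum_sphereFinset_dist {v' : V} {F : ℕ → R} (hG : G.IsTree)
    (hd : ∀ u, G.degree u = d (G.dist v u)) (hd' : ∀ u, G.degree u = d (G.dist v' u))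
    (hF : IsLaplaceEigenfunction G γ fun u ↦ F (G.dist v u)) (n : ℕ) :
    F 0 * ∑ u ∈ sphereFinset G v n, F (G.dist u v') =
      (sphereFinset G v n).card * F (G.dist v v') * F n := by
  have hcomm := mul_sum_sphereFinset_comm hG hd hF (hF.radial_of_radial hG hd hd') n
  rw [sum_sphereFinset_radial hG.connected, nsmul_eq_mul, dist_self] at hcomm
  simp only [dist_comm (v := v')]
  rw [hcomm, dist_comm]
  ring

end IsLaplaceEigenfunction

end Eigenfunction

end Tree

namespace SemiHomTree

variable {qp qm : ℕ} {V : Type} (T : SemiHomTree qp qm V)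

lemma isTree : T.G.IsTree := ⟨T.connected, T.acyclic⟩

noncomputable instance : T.G.LocallyFinite := fun v ↦ (T.nbr_finite v).fintype

lemma degree_eq (u : V) : T.G.degree u = (if T.eps u then qp else qm) + 1 := by
  rw [← SimpleGraph.card_neighborFinset_eq_degree, ← Set.ncard_coe_finset,
    SimpleGraph.coe_neighborFinset]
  cases hu : T.eps u with
  | true => exact T.degree_plus u hu
  | false => exact T.degree_minus u hu

lemma even_dist_iff (v u : V) : Even (T.G.dist v u) ↔ (T.eps v = true ↔ T.eps u = true) := by
  let parity : T.G.Coloring Bool :=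
    SimpleGraph.Coloring.mk T.eps fun hadj heq ↦ by simp [T.adj_parity hadj] at heq
  obtain ⟨p, hp⟩ := T.connected.exists_walk_length_eq_dist v u
  exact hp ▸ parity.even_length_iff_congr p

/-- The degree of the vertices at distance `n` from a vertex of parity `b`. -/
def degreeAtDist (qp qm : ℕ) (b : Bool) (n : ℕ) : ℕ :=
  (if Even n ↔ b = true then qp else qm) + 1

lemma degree_eq_degreeAtDist (v u : V) :
    T.G.degree u = degreeAtDist qp qm (T.eps v) (T.G.dist v u) := by
  have hiff : (Even (T.G.dist v u) ↔ T.eps v = true) ↔ T.eps u = true := by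
    rw [T.even_dist_iff]; tauto
  simp only [degree_eq, degreeAtDist, hiff]

lemma isLaplaceEigenfunction_iff {γ : ℂ} {f : V → ℂ} :
    IsLaplaceEigenfunction T.G γ f ↔ ∀ u, lap T f u = γ * f u := by
  refine forall_congr' fun u ↦ ?_
  have hdeg : (((if T.eps u then qp else qm : ℕ) : ℂ) + 1) = T.G.degree u := by
    rw [degree_eq]; push_cast; rfl
  have hne : (T.G.degree u : ℂ) ≠ 0 := by rw [← hdeg]; exact Nat.cast_add_one_ne_zero _
  have hsum : ∑ᶠ w ∈ {w | T.G.Adj u w}, f w = ∑ w ∈ T.G.neighborFinset u, f w := by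
    rw [← finsum_mem_coe_finset, SimpleGraph.coe_neighborFinset]; rfl
  rw [lap, hdeg, hsum, inv_mul_eq_iff_eq_mul₀ hne]

end SemiHomTree

theorem stmt_14_general {qp qm : ℕ} {V : Type} (T : SemiHomTree qp qm V) (v0 : V)
    (f : V → ℂ) (F : ℕ → ℂ) (hrad : ∀ v : V, f v = F (T.G.dist v0 v)) (γ : ℂ)
    (heig : ∀ v : V, lap T f v = γ * f v) (hone : f v0 = 1)
    (v : V) (hv : T.eps v = T.eps v0) (n : ℕ) :
    (∑ᶠ u ∈ {u : V | T.G.dist v0 u = n}, F (T.G.dist u v)) =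
      ({u : V | T.G.dist v0 u = n}.ncard : ℂ) * F (T.G.dist v0 v) * F n := by
  obtain rfl : f = fun u ↦ F (T.G.dist v0 u) := funext hrad
  have hF0 : F 0 = 1 := by simpa using hone
  have hdeg : ∀ u, T.G.degree u = SemiHomTree.degreeAtDist qp qm (T.eps v0) (T.G.dist v u) :=
    hv ▸ T.degree_eq_degreeAtDist v
  have hsum := (T.isLaplaceEigenfunction_iff.2 heig).sum_sphereFinset_dist T.isTree
    (T.degree_eq_degreeAtDist v0) hdeg n
  rw [hF0, one_mul] at hsum
  rw [← coe_sphereFinset T.connected, finsum_mem_coe_finset, Set.ncard_coe_finset, hsum]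

theorem stmt_14 {qp qm : ℕ} (hqp : 2 ≤ qp) (hqm : 2 ≤ qm) {V : Type}
    (T : SemiHomTree qp qm V) (v0 : V) (hv0 : T.eps v0 = true)
    (f : V → ℂ) (F : ℕ → ℂ) (hrad : ∀ v : V, f v = F (T.G.dist v0 v)) (γ : ℂ)
    (heig : ∀ v : V, lap T f v = γ * f v) (hone : f v0 = 1)
    (v : V) (hv : T.eps v = true) (n : ℕ) (hn : Even n) :
    (∑ᶠ u ∈ {u : V | T.G.dist v0 u = n}, F (T.G.dist u v)) =
      ({u : V | T.G.dist v0 u = n}.ncard : ℂ) * F (T.G.dist v0 v) * F n :=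
  stmt_14_general T v0 f F hrad γ heig hone v (hv.trans hv0.symm) n
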